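/- arXiv:2506.05282 — 5 statements merged into one kernel-verified Lean document; each statement's English description precedes it below -/
import Mathlib

section
/- Let (Ω, μ) be a measure space, T : Ω ≃ Ω a measurable equivalence that preserves μ (the pushforward of μ under T equals μ), R a linear isometric equivalence of the Euclidean space ℝ^n, and f : Ω → ℝ^n a measurable map satisfying f(T ω) = R(f ω) for μ-almost every ω. Then for every measurable V : Ω → ℝ^n, the conditional flow matching loss is invariant under the conjugated action: ∫ ‖R(V(T⁻¹ ω)) − f(ω)‖² dμ(ω) = ∫ ‖V(ω) − f(ω)‖² dμ(ω). -/
open MeasureTheory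

/-- **G-invariance of the conditional flow matching loss** (single group element).
If `T` is a measure-preserving measurable equivalence of the sample space, `R` a linear
isometric equivalence of Euclidean space, and the target field `f` is equivariant
(`f (T ω) = R (f ω)` a.e.), then the CFM loss of the conjugated field
`ω ↦ R (V (T⁻¹ ω))` equals that of `V`. -/
theorem cfm_loss_invariant {Ω : Type*} [MeasurableSpace Ω] (μ : Measure Ω) (n : ℕ)
    (T : Ω ≃ᵐ Ω) (hT : μ.map T = μ)
    (R : EuclideanSpace ℝ (Fin n) ≃ₗᵢ[ℝ] EuclideanSpace ℝ (Fin n))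
    (f : Ω → EuclideanSpace ℝ (Fin n)) (hf : Measurable f)
    (hequiv : ∀ᵐ ω ∂μ, f (T ω) = R (f ω))
    (V : Ω → EuclideanSpace ℝ (Fin n)) (hV : Measurable V) :
    ∫ ω, ‖R (V (T.symm ω)) - f ω‖ ^ 2 ∂μ = ∫ ω, ‖V ω - f ω‖ ^ 2 ∂μ := by
  have hmp : MeasurePreserving T μ μ := ⟨T.measurable, hT⟩
  rw [← hmp.integral_comp T.measurableEmbedding
    (fun ω => ‖R (V (T.symm ω)) - f ω‖ ^ 2)]
  refine integral_congr_ae ?_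
  filter_upwards [hequiv] with ω hω
  simp only [MeasurableEquiv.symm_apply_apply]
  rw [hω, ← map_sub, R.norm_map]
end

section
/- Let (Ω, μ) be a measure space, T : Ω ≃ Ω a measurable equivalence that preserves μ, R a linear isometric equivalence of ℝ^n, and f : Ω → ℝ^n measurable with f(T ω) = R(f ω) for μ-almost every ω. If a measurable V* : Ω → ℝ^n minimizes the conditional flow matching loss L over all measurable fields, i.e., L(V*) ≤ L(W) for every measurable W : Ω → ℝ^n, then the conjugated field ω ↦ R(V*(T⁻¹ ω)) also satisfies L(ω ↦ R(V*(T⁻¹ ω))) ≤ L(W) for every measurable W : Ω → ℝ^n. -/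
open MeasureTheory

/-- **The set of minimizers of the CFM loss is invariant under the symmetry action.**
If `V⋆` minimizes the conditional flow matching loss over all measurable velocity fields,
then so does its conjugate `ω ↦ R (V⋆ (T⁻¹ ω))` under a measure-preserving equivalence `T`
and a rotation `R` for which the target field `f` is equivariant. -/
theorem cfm_minimizer_invariant {Ω : Type*} [MeasurableSpace Ω] (μ : Measure Ω) (n : ℕ)
    (T : Ω ≃ᵐ Ω) (hT : μ.map T = μ)
    (R : EuclideanSpace ℝ (Fin n) ≃ₗᵢ[ℝ] EuclideanSpace ℝ (Fin n))
    (f : Ω → EuclideanSpace ℝ (Fin n)) (hf : Measurable f)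
    (hequiv : ∀ᵐ ω ∂μ, f (T ω) = R (f ω))
    (Vstar : Ω → EuclideanSpace ℝ (Fin n)) (hVstar : Measurable Vstar)
    (hmin : ∀ W : Ω → EuclideanSpace ℝ (Fin n), Measurable W →
      ∫ ω, ‖Vstar ω - f ω‖ ^ 2 ∂μ ≤ ∫ ω, ‖W ω - f ω‖ ^ 2 ∂μ) :
    ∀ W : Ω → EuclideanSpace ℝ (Fin n), Measurable W →
      ∫ ω, ‖R (Vstar (T.symm ω)) - f ω‖ ^ 2 ∂μ ≤ ∫ ω, ‖W ω - f ω‖ ^ 2 ∂μ := by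
  intro W hW
  have key : ∫ ω, ‖R (Vstar (T.symm ω)) - f ω‖ ^ 2 ∂μ = ∫ ω, ‖Vstar ω - f ω‖ ^ 2 ∂μ := by
    have hmp : MeasurePreserving T μ μ := ⟨T.measurable, hT⟩
    rw [← hmp.integral_comp' (fun ω => ‖R (Vstar (T.symm ω)) - f ω‖ ^ 2)]
    apply integral_congr_ae
    filter_upwards [hequiv] with ω hω
    simp only [MeasurableEquiv.symm_apply_apply]
    rw [hω, ← map_sub, R.norm_map]
  rw [key]
  exact hmin W hW
end

section
/- Fix H ∈ ℕ and, for each i ∈ Fin H, a measure μ_i on a common measurable space Ω, a weight w_i ≥ 0, a measurable target field f_i : Ω → ℝ^n, and a linear isometric equivalence R_i of ℝ^n; let σ be a permutation of Fin H. Assume for every i: (a) w_{σ(i)} = w_i; (b) μ_{σ(i)} = μ_i; and (c) f_{σ(i)}(ω) = R_{σ(i)}(f_i(ω)) for μ_i-almost every ω. Then for every family of measurable fields V_i : Ω → ℝ^n, the weighted conditional flow matching loss is invariant under the assembly symmetry action: Σ_{i} w_i ∫ ‖R_i(V_{σ⁻¹(i)}(ω)) − f_i(ω)‖² dμ_i(ω)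 = Σ_{i} w_i ∫ ‖V_i(ω) − f_i(ω)‖² dμ_i(ω). -/
open MeasureTheory

/-- **Multi-part G-invariance of the weighted conditional flow matching loss**
(Theorem 1 of Rectified Point Flow). For an assembly symmetry group element
`g = (R_1, …, R_H, σ)` acting on a family of per-part velocity fields by
`(g·V)_i(ω) = R_i (V_{σ⁻¹ i} ω)`, the weighted CFM loss is invariant, provided the
weights and sample measures are `σ`-invariant and the target fields are equivariant. -/
theorem multi_part_cfm_loss_invariant {Ω : Type*} [MeasurableSpace Ω] (n H : ℕ)
    (μ : Fin H → Measure Ω) (w : Fin H → ℝ) (hw : ∀ i, 0 ≤ w i)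
    (f : Fin H → Ω → EuclideanSpace ℝ (Fin n)) (hf : ∀ i, Measurable (f i))
    (R : Fin H → (EuclideanSpace ℝ (Fin n) ≃ₗᵢ[ℝ] EuclideanSpace ℝ (Fin n)))
    (σ : Equiv.Perm (Fin H))
    (hwσ : ∀ i, w (σ i) = w i)
    (hμσ : ∀ i, μ (σ i) = μ i)
    (hfσ : ∀ i, ∀ᵐ ω ∂(μ i), f (σ i) ω = R (σ i) (f i ω))
    (V : Fin H → Ω → EuclideanSpace ℝ (Fin n)) (hV : ∀ i, Measurable (V i)) :
    ∑ i, w i * ∫ ω, ‖R i (V (σ⁻¹ i) ω) - f i ω‖ ^ 2 ∂(μ i)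
      = ∑ i, w i * ∫ ω, ‖V i ω - f i ω‖ ^ 2 ∂(μ i) := by
  rw [← Equiv.sum_comp σ]
  refine Finset.sum_congr rfl fun i _ => ?_
  rw [hwσ, hμσ]
  congr 1
  refine integral_congr_ae ?_
  filter_upwards [hfσ i] with ω hω
  rw [hω, show σ⁻¹ (σ i) = i from σ.symm_apply_apply i, ← map_sub, LinearIsometryEquiv.norm_map]
end

section
/- Let μ and ν be probability measures on ℝ^n (with the Borel σ-algebra), and let R be a linear isometric equivalence of ℝ^n such that the pushforward of μ under R equals μ and the pushforward of ν under R equals ν. Define the path map Ψ : ℝ^n × ℝ^n → (ℝ → ℝ^n) by Ψ(x, y) = (t ↦ (1 − t)·x + t·y), where ℝ → ℝ^n carries the product (pointwise) σ-algebra, and define the pointwise action R̂ : (ℝ → ℝ^n) → (ℝ → ℝ^n) by R̂(γ) = R ∘ γ. Then the law of the whole flow path is invariant: ((μ ⊗ ν).map Ψ).map R̂ = (μ ⊗ ν).map Ψ. -/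
open MeasureTheory

/-- **Path-space form of Lemma 1 (G-invariance of the flow distribution).**
The law of the whole straight-line flow path `t ↦ (1 − t)·x + t·y`, with independent
endpoints `x ∼ μ` and `y ∼ ν` whose laws are invariant under a rotation `R`, is itself
invariant under the pointwise action `γ ↦ R ∘ γ` (the path space `ℝ → ℝⁿ` carries the
product σ-algebra). -/
theorem path_law_invariant (n : ℕ)
    (μ ν : Measure (EuclideanSpace ℝ (Fin n)))
    [IsProbabilityMeasure μ] [IsProbabilityMeasure ν]
    (R : EuclideanSpace ℝ (Fin n) ≃ₗᵢ[ℝ] EuclideanSpace ℝ (Fin n))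
    (hμ : μ.map R = μ) (hν : ν.map R = ν) :
    (((μ.prod ν).map (fun p : EuclideanSpace ℝ (Fin n) × EuclideanSpace ℝ (Fin n) =>
          fun t : ℝ => (1 - t) • p.1 + t • p.2)).map
        (fun γ : ℝ → EuclideanSpace ℝ (Fin n) => fun t => R (γ t)))
      = (μ.prod ν).map (fun p : EuclideanSpace ℝ (Fin n) × EuclideanSpace ℝ (Fin n) =>
          fun t : ℝ => (1 - t) • p.1 + t • p.2) := by
  have hR : Measurable R := R.continuous.measurable
  have hΨ : Measurable (fun p : EuclideanSpace ℝ (Fin n) × EuclideanSpace ℝ (Fin n) =>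
      fun t : ℝ => (1 - t) • p.1 + t • p.2) :=
    measurable_pi_lambda _ fun t =>
      (measurable_fst.const_smul (1 - t)).add (measurable_snd.const_smul t)
  have hA : Measurable (fun γ : ℝ → EuclideanSpace ℝ (Fin n) => fun t => R (γ t)) :=
    measurable_pi_lambda _ fun t => hR.comp (measurable_pi_apply t)
  have hprod : (μ.prod ν).map (Prod.map R R) = μ.prod ν := by
    rw [← Measure.map_prod_map μ ν hR hR, hμ, hν]
  conv_rhs => rw [← hprod]
  rw [Measure.map_map hA hΨ, Measure.map_map hΨ (hR.prodMap hR)]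
  congr 1
  funext p t
  simp [Function.comp]
end

section
/- Let X* and X̂ be real 3 × N matrices with N ≥ 1, suppose the rows of X* each sum to zero (X* · 𝟙 = 0), suppose ‖X̂ − X*‖_F ≤ ε for some ε ≥ 0, and suppose s > 0 satisfies vᵀ (X*·X*ᵀ) v ≥ s·‖v‖² for every v ∈ ℝ³. Let (R̂, t̂) with R̂ a 3 × 3 real matrix satisfying R̂ᵀ·R̂ = I and det R̂ = 1, and t̂ ∈ ℝ³, be a minimizer of the Procrustes objective (R, t) ↦ ‖R·X̂ + t𝟙ᵀ − X*‖_F over all such pairs. Then ‖(R̂ − I)·X*‖_F² + N·‖t̂‖² ≤ 4ε², and consequently ‖R̂ − I‖_F ≤ 2ε/√s and ‖t̂‖ ≤ 2ε/√N. -/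
open scoped Matrix

/-- The squared Frobenius norm of a real matrix: the sum of the squares of its entries. -/
def frobSq {m n : ℕ} (A : Matrix (Fin m) (Fin n) ℝ) : ℝ := ∑ i, ∑ j, (A i j) ^ 2

/-- The Frobenius norm of a real matrix. -/
noncomputable def frobNorm {m n : ℕ} (A : Matrix (Fin m) (Fin n) ℝ) : ℝ :=
  Real.sqrt (frobSq A)

theorem frobSq_nonneg' {m n : ℕ} (A : Matrix (Fin m) (Fin n) ℝ) : 0 ≤ frobSq A :=
  Finset.sum_nonneg fun _ _ => Finset.sum_nonneg fun _ _ => sq_nonneg _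

theorem frobSq_eq_trace' {m n : ℕ} (A : Matrix (Fin m) (Fin n) ℝ) :
    frobSq A = (Aᵀ * A).trace := by
  simp only [frobSq, Matrix.trace, Matrix.diag, Matrix.mul_apply, Matrix.transpose_apply, ← pow_two]
  exact Finset.sum_comm

theorem frobSq_rot' {m n : ℕ} (R : Matrix (Fin m) (Fin m) ℝ) (A : Matrix (Fin m) (Fin n) ℝ)
    (hR : Rᵀ * R = 1) : frobSq (R * A) = frobSq A := by
  rw [frobSq_eq_trace', frobSq_eq_trace', Matrix.transpose_mul, Matrix.mul_assoc,
    ← Matrix.mul_assoc Rᵀ, hR, Matrix.one_mul]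

theorem frobSq_sub_le' {m n : ℕ} (A B : Matrix (Fin m) (Fin n) ℝ) :
    frobSq (A - B) ≤ 2 * (frobSq A + frobSq B) := by
  simp only [frobSq, ← Finset.sum_add_distrib, Finset.mul_sum]
  refine Finset.sum_le_sum fun i _ => Finset.sum_le_sum fun j _ => ?_
  simp only [Matrix.sub_apply]
  nlinarith [sq_nonneg (A i j + B i j)]

theorem frobSq_add_const' {m n : ℕ} (A : Matrix (Fin m) (Fin n) ℝ) (t : Fin m → ℝ)
    (hA : ∀ i, ∑ j, A i j = 0) :
    frobSq (A + Matrix.of fun i _ => t i) = frobSq A + n * ∑ i, (t i) ^ 2 := by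
  simp only [frobSq, Finset.mul_sum, ← Finset.sum_add_distrib]
  refine Finset.sum_congr rfl fun i _ => ?_
  simp only [Matrix.add_apply, Matrix.of_apply, add_sq, Finset.sum_add_distrib, mul_assoc,
    ← Finset.mul_sum, ← Finset.sum_mul, hA]
  simp

theorem frobSq_gram' {n : ℕ} (A : Matrix (Fin 3) (Fin 3) ℝ) (X : Matrix (Fin 3) (Fin n) ℝ)
    (s : ℝ)
    (hgram : ∀ v : Fin 3 → ℝ, s * ∑ i, (v i) ^ 2 ≤ v ⬝ᵥ (X * Xᵀ).mulVec v) :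
    s * frobSq A ≤ frobSq (A * X) := by
  simp only [frobSq, Finset.mul_sum]
  refine Finset.sum_le_sum fun i _ => ?_
  have h := hgram (A i)
  rw [← Matrix.mulVec_mulVec, Matrix.dotProduct_mulVec, Matrix.mulVec_transpose] at h
  rw [Finset.mul_sum] at h
  refine h.trans (le_of_eq ?_)
  simp only [dotProduct, ← pow_two]
  rfl

/-- **Lipschitz contracting property of the Procrustes operator (Property 1), with explicit
constants.** Let `X*` be a centered 3×N ground-truth point cloud with Gram matrix bounded
below by `s > 0`, and let `X̂` be within `ε` of `X*` in Frobenius norm. If `(R̂, t̂) ∈ SE(3)`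
minimizes the Procrustes objective `(R, t) ↦ ‖R·X̂ + t𝟙ᵀ − X*‖_F`, then
`‖(R̂ − I)·X*‖_F² + N·‖t̂‖² ≤ 4ε²`, hence `‖R̂ − I‖_F ≤ 2ε/√s` and `‖t̂‖ ≤ 2ε/√N`. -/
theorem procrustes_lipschitz_contracting {N : ℕ} (hN : 1 ≤ N)
    (Xstar Xhat : Matrix (Fin 3) (Fin N) ℝ)
    (hcentered : ∀ i, ∑ j, Xstar i j = 0)
    (ε : ℝ) (hε : 0 ≤ ε)
    (hclose : frobNorm (Xhat - Xstar) ≤ ε)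
    (s : ℝ) (hs : 0 < s)
    (hgram : ∀ v : Fin 3 → ℝ, s * ∑ i, (v i) ^ 2 ≤ v ⬝ᵥ (Xstar * Xstarᵀ).mulVec v)
    (Rhat : Matrix (Fin 3) (Fin 3) ℝ) (that : Fin 3 → ℝ)
    (hRhat : Rhatᵀ * Rhat = 1) (hdet : Rhat.det = 1)
    (hmin : ∀ (R : Matrix (Fin 3) (Fin 3) ℝ) (t : Fin 3 → ℝ),
      Rᵀ * R = 1 → R.det = 1 →
        frobNorm (Rhat * Xhat + (Matrix.of fun i _ => that i) - Xstar)
          ≤ frobNorm (R * Xhat + (Matrix.of fun i _ => t i) - Xstar)) :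
    frobSq ((Rhat - 1) * Xstar) + N * ∑ i, (that i) ^ 2 ≤ 4 * ε ^ 2
      ∧ frobNorm (Rhat - 1) ≤ 2 * ε / Real.sqrt s
      ∧ Real.sqrt (∑ i, (that i) ^ 2) ≤ 2 * ε / Real.sqrt N := by
  have h1 : frobSq (Xhat - Xstar) ≤ ε ^ 2 := (Real.sqrt_le_left hε).1 hclose
  have h2 : frobSq (Rhat * Xhat + (Matrix.of fun i _ => that i) - Xstar) ≤ ε ^ 2 := by
    refine (Real.sqrt_le_left hε).1 ((hmin 1 0 (by simp) (by simp)).trans ?_)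
    have : (1 : Matrix (Fin 3) (Fin 3) ℝ) * Xhat
        + (Matrix.of fun i _ => (0 : Fin 3 → ℝ) i) - Xstar = Xhat - Xstar := by
      ext i j; simp
    rw [this]; exact hclose
  have h3 : frobSq (Rhat * (Xhat - Xstar)) ≤ ε ^ 2 := by rwa [frobSq_rot' _ _ hRhat]
  have h4 := frobSq_sub_le' (Rhat * Xhat + (Matrix.of fun i _ => that i) - Xstar)
    (Rhat * (Xhat - Xstar))
  have h5 : Rhat * Xhat + (Matrix.of fun i _ => that i) - Xstar - Rhat * (Xhat - Xstar)
      = (Rhat - 1) * Xstar + Matrix.of fun i _ => that i := by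
    rw [Matrix.mul_sub, Matrix.sub_mul, Matrix.one_mul]; abel
  have h6 : ∀ i, ∑ j, ((Rhat - 1) * Xstar : Matrix (Fin 3) (Fin N) ℝ) i j = 0 := by
    intro i
    simp only [Matrix.mul_apply]
    rw [Finset.sum_comm]
    simp [← Finset.mul_sum, hcentered]
  rw [h5, frobSq_add_const' _ _ h6] at h4
  have main : frobSq ((Rhat - 1) * Xstar) + N * ∑ i, (that i) ^ 2 ≤ 4 * ε ^ 2 := by linarith
  have hN' : (0 : ℝ) < N := by exact_mod_cast hN
  have ht : 0 ≤ ∑ i, (that i) ^ 2 := Finset.sum_nonneg fun _ _ => sq_nonneg _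
  have key : ∀ a c : ℝ, 0 < c → c * a ≤ 4 * ε ^ 2 → Real.sqrt a ≤ 2 * ε / Real.sqrt c := by
    intro a c hc h
    rw [Real.sqrt_le_left (by positivity), div_pow, Real.sq_sqrt hc.le, le_div_iff₀ hc]
    linarith
  refine ⟨main, key _ _ hs ?_, key _ _ hN' ?_⟩
  · have := frobSq_gram' (Rhat - 1) Xstar s hgram
    have := mul_nonneg hN'.le ht
    linarith
  · linarith [frobSq_nonneg' ((Rhat - 1) * Xstar)]
end
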